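/- Let M ∈ ℝ^{p×p} be positive semi-definite and b ∈ ℝ^p. If there exists a vector x ≥ 0 with Mx + b ≥ 0, then the linear complementarity problem LCP(M,b) — find x ≥ 0 with Mx + b ≥ 0 and xᵀ(Mx + b) = 0 — has a solution. -/

import Mathlib

open Matrix

/-!
Write `LCP(M, b)` for the complementarity problem. Its set of solvable right-hand sides `b` is the
union, over the index sets `s`, of the cones generated by the columns `-M eᵢ` (`i ∈ s`) and `eᵢ`
(`i ∉ s`). There are finitely many of these cones, and each is closed because it is finitely
generated, so it is enough to approximate `b` by solvable right-hand sides.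

For `ε > 0` the matrix `M + ε I` is strongly monotone. Hence `x ↦ (x - τ (M x + ε x + b))⁺` is a
contraction for small `τ > 0`, and its fixed point `x_ε` solves `LCP(M + ε I, b)`, which is to say
`LCP(M, b + ε x_ε)`. Testing monotonicity of `M` against a feasible point bounds `ε ‖x_ε‖²`
uniformly, so `ε x_ε → 0` and `b + ε x_ε → b`.
-/

open Filter Topology
open scoped NNReal RealInnerProductSpace

section ConeHull

section OrderedRing

variable {R ι E : Type*} [Ring R] [LinearOrder R] [IsStrictOrderedRing R]
  [AddCommGroup E] [Module R E] {v : ι → E} {x : E}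

lemma mem_coneHull_image_finset_iff {s : Finset ι} :
    x ∈ PointedCone.hull R (v '' s) ↔
      ∃ c : ι → R, 0 ≤ c ∧ ∑ i ∈ s, c i • v i = x := by
  rw [Submodule.mem_span_image_finset_iff_exists_fun']
  exact ⟨fun ⟨c, hc⟩ ↦ ⟨fun i ↦ c i, fun i ↦ (c i).2, hc⟩,
    fun ⟨c, hc, hx⟩ ↦ ⟨fun i ↦ ⟨c i, hc i⟩, hx⟩⟩

lemma mem_coneHull_range_iff [Fintype ι] :
    x ∈ PointedCone.hull R (Set.range v) ↔ ∃ c : ι → R, 0 ≤ c ∧ ∑ i, c i • v i = x := by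
  simpa using mem_coneHull_image_finset_iff (R := R) (v := v) (s := .univ)

lemma exists_pos_of_not_linearIndepOn {s : Finset ι} (h : ¬LinearIndepOn R v s) :
    ∃ d : ι → R, ∑ i ∈ s, d i • v i = 0 ∧ ∃ i ∈ s, 0 < d i := by
  rw [linearIndepOn_finset_iff] at h
  push Not at h
  obtain ⟨d, hd, i, hi, hne⟩ := h
  rcases hne.lt_or_gt with hneg | hpos
  · exact ⟨-d, by simp [hd], i, hi, by simpa using hneg⟩
  · exact ⟨d, hd, i, hi, hpos⟩

end OrderedRing

section OrderedField

variable {R ι E : Type*} [Field R] [LinearOrder R] [IsStrictOrderedRing R]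
  [AddCommGroup E] [Module R E] {v : ι → E} {x : E}

/- The ratio test of the simplex method: `r` is the least of the quotients `c i / d i` with
`0 < d i`. -/
lemma exists_sub_mul_nonneg_and_eq_zero {s : Finset ι} {c d : ι → R} (hc : 0 ≤ c)
    (hd : ∃ i ∈ s, 0 < d i) :
    ∃ k ∈ s, ∃ r, (∀ i ∈ s, 0 ≤ c i - r * d i) ∧ c k - r * d k = 0 := by
  obtain ⟨j, hjs, hj⟩ := hd
  obtain ⟨k, hk, hmin⟩ := (s.filter (0 < d ·)).exists_min_image (fun i ↦ c i / d i)
    ⟨j, Finset.mem_filter.2 ⟨hjs, hj⟩⟩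
  obtain ⟨hks, hdk⟩ := Finset.mem_filter.1 hk
  refine ⟨k, hks, c k / d k, fun i hi ↦ sub_nonneg.2 ?_, by field_simp; ring⟩
  rcases lt_or_ge 0 (d i) with hdi | hdi
  · exact (le_div_iff₀ hdi).1 (hmin i (Finset.mem_filter.2 ⟨hi, hdi⟩))
  · exact (mul_nonpos_of_nonneg_of_nonpos (div_nonneg (hc k) hdk.le) hdi).trans (hc i)

lemma exists_mem_coneHull_image_erase [DecidableEq ι] {s : Finset ι} (h : ¬LinearIndepOn R v s)
    (hx : x ∈ PointedCone.hull R (v '' s)) :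
    ∃ k ∈ s, x ∈ PointedCone.hull R (v '' (s.erase k)) := by
  obtain ⟨c, hc, rfl⟩ := mem_coneHull_image_finset_iff.1 hx
  obtain ⟨d, hd, hpos⟩ := exists_pos_of_not_linearIndepOn h
  obtain ⟨k, hk, r, hr, hrk⟩ := exists_sub_mul_nonneg_and_eq_zero hc hpos
  refine ⟨k, hk, ?_⟩
  have hsum : ∑ i ∈ s.erase k, (c i - r * d i) • v i = ∑ i ∈ s, c i • v i := by
    rw [Finset.sum_erase _ (by rw [hrk, zero_smul])]
    simp [sub_smul, mul_smul, ← Finset.smul_sum, hd]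
  rw [← hsum]
  exact sum_mem fun i hi ↦ PointedCone.smul_mem _ (hr i (Finset.mem_of_mem_erase hi))
    (PointedCone.subset_hull ⟨i, hi, rfl⟩)

theorem exists_subset_linearIndepOn_mem_coneHull_image {s : Finset ι}
    (hx : x ∈ PointedCone.hull R (v '' s)) :
    ∃ t ⊆ s, LinearIndepOn R v t ∧ x ∈ PointedCone.hull R (v '' t) := by
  classical
  induction s using Finset.strongInduction with
  | H s ih =>
    by_cases hs : LinearIndepOn R v s
    · exact ⟨s, subset_rfl, hs, hx⟩
    · obtain ⟨k, hk, hxk⟩ := exists_mem_coneHull_image_erase hs hx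
      obtain ⟨t, hts, ht⟩ := ih _ (Finset.erase_ssubset hk) hxk
      exact ⟨t, hts.trans (Finset.erase_subset k s), ht⟩

end OrderedField

end ConeHull

section ClosedCone

variable {ι E : Type*} [AddCommGroup E] [Module ℝ E] [TopologicalSpace E]
  [IsTopologicalAddGroup E] [ContinuousSMul ℝ E] [T2Space E] {v : ι → E}

lemma isClosed_coneHull_range_of_linearIndependent [Finite ι] (hv : LinearIndependent ℝ v) :
    IsClosed (PointedCone.hull ℝ (Set.range v) : Set E) := by
  have := Fintype.ofFinite ι
  have hker : LinearMap.ker (Fintype.linearCombination ℝ v) = ⊥ :=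
    LinearMap.ker_eq_bot.2 hv.fintypeLinearCombination_injective
  have himage : (PointedCone.hull ℝ (Set.range v) : Set E) =
      Fintype.linearCombination ℝ v '' Set.Ici 0 := by
    ext x
    simp [mem_coneHull_range_iff, Fintype.linearCombination_apply]
  rw [himage]
  exact (LinearMap.isClosedEmbedding_of_injective hker).isClosedMap _ isClosed_Ici

theorem isClosed_coneHull_image_finset (v : ι → E) (s : Finset ι) :
    IsClosed (PointedCone.hull ℝ (v '' s) : Set E) := by
  have hunion : (PointedCone.hull ℝ (v '' s) : Set E) =
      ⋃ t ∈ {t : Finset ι | t ⊆ s ∧ LinearIndepOn ℝ v t}, PointedCone.hull ℝ (v '' t) := by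
    refine subset_antisymm (fun x hx ↦ ?_) (Set.iUnion₂_subset fun t ht ↦ ?_)
    · obtain ⟨t, hts, ht, hxt⟩ := exists_subset_linearIndepOn_mem_coneHull_image hx
      exact Set.mem_biUnion ⟨hts, ht⟩ hxt
    · exact Submodule.span_mono (Set.image_mono (Finset.coe_subset.2 ht.1))
  rw [hunion]
  refine Set.Finite.isClosed_biUnion ?_ fun t ht ↦ ?_
  · exact s.powerset.finite_toSet.subset fun t ht ↦ Finset.mem_coe.2 (Finset.mem_powerset.2 ht.1)
  · rw [Set.image_eq_range]
    exact isClosed_coneHull_range_of_linearIndependent ht.2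

end ClosedCone

section Complementarity

lemma sub_mulVec_eq_sum {R ι : Type*} [CommRing R] [Fintype ι] [DecidableEq ι] (M : Matrix ι ι R)
    (x w : ι → R) : w - M *ᵥ x = ∑ i, (w i • Pi.single i 1 - x i • M.col i) := by
  ext j
  simp [mulVec, dotProduct, Finset.sum_apply, Pi.single_apply, mul_comm]

variable {R ι : Type*} [CommRing R] [LinearOrder R] [IsStrictOrderedRing R] [Fintype ι]
  {M : Matrix ι ι R} {b x w z : ι → R}

/-- Complementary pairs of vectors: `x` solves the linear complementarity problem `LCP(M, b)`
when `IsComplementary x (M *ᵥ x + b)`. -/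
def IsComplementary (x w : ι → R) : Prop :=
  0 ≤ x ∧ 0 ≤ w ∧ x ⬝ᵥ w = 0

lemma isComplementary_iff_forall :
    IsComplementary x w ↔ ∀ i, 0 ≤ x i ∧ 0 ≤ w i ∧ x i * w i = 0 := by
  constructor
  · rintro ⟨hx, hw, hxw⟩ i
    exact ⟨hx i, hw i, (Finset.sum_eq_zero_iff_of_nonneg
      fun j _ ↦ mul_nonneg (hx j) (hw j)).1 hxw i (Finset.mem_univ i)⟩
  · intro h
    exact ⟨fun i ↦ (h i).1, fun i ↦ (h i).2.1, Finset.sum_eq_zero fun i _ ↦ (h i).2.2⟩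

lemma isComplementary_of_posPart_sub_smul_eq {τ : R} (hτ : 0 < τ) (h : (x - τ • w)⁺ = x) :
    IsComplementary x w := by
  refine isComplementary_iff_forall.2 fun i ↦ ?_
  have hi : max (x i - τ * w i) 0 = x i := congrFun h i
  rcases max_cases (x i - τ * w i) 0 with ⟨hmax, hle⟩ | ⟨hmax, hlt⟩
  · have hw : w i = 0 := by
      have hτw : τ * w i = 0 := by linarith
      exact (mul_eq_zero.1 hτw).resolve_left hτ.ne'
    exact ⟨by simpa [hw] using hle, hw.ge, by simp [hw]⟩
  · have hx : x i = 0 := hi.symm.trans hmax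
    have hw : 0 < w i := pos_of_mul_pos_right (by linarith) hτ.le
    exact ⟨hx.ge, hw.le, by simp [hx]⟩

section ComplementaryCone

variable [DecidableEq ι]

/-- The complementary cone of `M` at `s`: the right-hand sides `b` for which `LCP(M, b)` has a
solution `x` supported in `s` with `M *ᵥ x + b` supported outside `s`. -/
def complementaryCone (M : Matrix ι ι R) (s : Finset ι) : PointedCone R (ι → R) :=
  PointedCone.hull R (Set.range fun i ↦ if i ∈ s then -M.col i else Pi.single i 1)

lemma exists_isComplementary_iff_exists_mem_complementaryCone :
    (∃ x, IsComplementary x (M *ᵥ x + b)) ↔ ∃ s, b ∈ complementaryCone M s := by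
  simp only [complementaryCone, mem_coneHull_range_iff]
  constructor
  · rintro ⟨x, hx⟩
    rw [isComplementary_iff_forall] at hx
    set w := M *ᵥ x + b with hw
    refine ⟨Finset.univ.filter (w · = 0), x + w, fun i ↦ add_nonneg (hx i).1 (hx i).2.1, ?_⟩
    rw [show b = w - M *ᵥ x by simp [hw], sub_mulVec_eq_sum]
    refine Finset.sum_congr rfl fun i _ ↦ ?_
    rcases eq_or_ne (w i) 0 with hwi | hwi
    · simp [hwi]
    · simp [hwi, (mul_eq_zero.1 (hx i).2.2).resolve_right hwi]
  · rintro ⟨s, c, hc, rfl⟩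
    let x : ι → R := fun i ↦ if i ∈ s then c i else 0
    let w : ι → R := fun i ↦ if i ∈ s then 0 else c i
    have hb : ∑ i, c i • (if i ∈ s then -M.col i else Pi.single i 1) = w - M *ᵥ x := by
      rw [sub_mulVec_eq_sum]
      refine Finset.sum_congr rfl fun i _ ↦ ?_
      by_cases hi : i ∈ s <;> simp [x, w, hi]
    refine ⟨x, isComplementary_iff_forall.2 fun i ↦ ?_⟩
    rw [hb, add_sub_cancel]
    by_cases hi : i ∈ s <;> simpa [x, w, hi] using hc i

end ComplementaryCone

theorem isClosed_setOf_exists_isComplementary (M : Matrix ι ι ℝ) :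
    IsClosed {b | ∃ x, IsComplementary x (M *ᵥ x + b)} := by
  classical
  simp only [exists_isComplementary_iff_exists_mem_complementaryCone, Set.ofPred_exists]
  refine isClosed_iUnion_of_finite fun s ↦ ?_
  have h := isClosed_coneHull_image_finset (fun i ↦ if i ∈ s then -M.col i else Pi.single i 1) .univ
  rwa [Finset.coe_univ, Set.image_univ] at h

/- Expand `0 ≤ (x - z) ⬝ᵥ M *ᵥ (x - z)` with `M *ᵥ (x - z) = w - ε • x - q`, where `w` and `q` are
the slacks at `x` and at `z`, and use `x ⬝ᵥ w = 0` and `2 (z ⬝ᵥ x) ≤ z ⬝ᵥ z + x ⬝ᵥ x`. -/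
lemma mul_dotProduct_self_le_of_isComplementary {ε : R} (hε : 0 ≤ ε)
    (hM : ∀ y : ι → R, 0 ≤ y ⬝ᵥ M *ᵥ y) (hx : IsComplementary x (M *ᵥ x + (b + ε • x)))
    (hz : 0 ≤ z) (hq : 0 ≤ M *ᵥ z + b) :
    ε * (x ⬝ᵥ x) ≤ ε * (z ⬝ᵥ z) + 2 * (z ⬝ᵥ (M *ᵥ z + b)) := by
  obtain ⟨hx0, hw, hxw⟩ := hx
  set w := M *ᵥ x + (b + ε • x) with hw_def
  set q := M *ᵥ z + b with hq_def
  have hMsub : M *ᵥ (x - z) = w - ε • x - q := by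
    rw [mulVec_sub, hw_def, hq_def]
    abel
  have hmono := hM (x - z)
  rw [hMsub] at hmono
  have hzw : 0 ≤ z ⬝ᵥ w := dotProduct_nonneg_of_nonneg hz hw
  have hxq : 0 ≤ x ⬝ᵥ q := dotProduct_nonneg_of_nonneg hx0 hq
  have hsq : 0 ≤ ε * ((x - z) ⬝ᵥ (x - z)) :=
    mul_nonneg hε (Finset.sum_nonneg fun i _ ↦ mul_self_nonneg _)
  simp only [sub_dotProduct, dotProduct_sub, dotProduct_smul, smul_eq_mul, hxw,
    dotProduct_comm x z] at hmono hsq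
  linarith

end Complementarity

section StrongMonotonicity

/- The squared Lipschitz constant of `x ↦ x - τ • F x` is at most `1 - 2 τ μ + τ² K²`, which is less
than `1` as soon as `τ K² < 2 μ`. -/
lemma exists_contractingWith_sub_smul {E : Type*} [NormedAddCommGroup E] [InnerProductSpace ℝ E]
    {F : E → E} {K : ℝ≥0} {μ : ℝ} (hF : LipschitzWith K F) (hμ : 0 < μ)
    (hmono : ∀ x y, μ * ‖x - y‖ ^ 2 ≤ ⟪x - y, F x - F y⟫) :
    ∃ τ : ℝ, 0 < τ ∧ ∃ k, ContractingWith k fun x ↦ x - τ • F x := by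
  let τ := μ / (K ^ 2 + 1)
  have hτ : 0 < τ := by positivity
  have hτK : τ * K ^ 2 < μ := by
    rw [div_mul_eq_mul_div, div_lt_iff₀ (by positivity)]
    linarith
  refine ⟨τ, hτ, (√(1 - τ * (2 * μ - τ * K ^ 2))).toNNReal, ?_, ?_⟩
  · rw [Real.toNNReal_lt_one, Real.sqrt_lt' one_pos]
    have hpos : 0 < τ * (2 * μ - τ * K ^ 2) := mul_pos hτ (by linarith)
    linarith
  refine LipschitzWith.of_dist_le' fun x y ↦ ?_
  rw [dist_eq_norm, dist_eq_norm, ← Real.sqrt_sq (norm_nonneg (x - y)),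
    ← Real.sqrt_mul' _ (sq_nonneg _)]
  apply Real.le_sqrt_of_sq_le
  have hlip : ‖F x - F y‖ ^ 2 ≤ (K * ‖x - y‖) ^ 2 := by
    gcongr
    exact hF.norm_sub_le x y
  calc ‖x - τ • F x - (y - τ • F y)‖ ^ 2
      = ‖x - y - τ • (F x - F y)‖ ^ 2 := by congr 2; module
    _ = ‖x - y‖ ^ 2 - 2 * τ * ⟪x - y, F x - F y⟫ + τ ^ 2 * ‖F x - F y‖ ^ 2 := by
        rw [norm_sub_sq_real, inner_smul_right, norm_smul, Real.norm_of_nonneg hτ.le]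
        ring
    _ ≤ ‖x - y‖ ^ 2 - 2 * τ * (μ * ‖x - y‖ ^ 2) + τ ^ 2 * (K * ‖x - y‖) ^ 2 := by
        gcongr
        exact hmono x y
    _ = (1 - τ * (2 * μ - τ * K ^ 2)) * ‖x - y‖ ^ 2 := by ring

variable {ι : Type*} [Fintype ι]

lemma lipschitzWith_toLp_posPart_ofLp :
    LipschitzWith 1 fun x : EuclideanSpace ℝ ι ↦ WithLp.toLp 2 x.ofLp⁺ := by
  refine LipschitzWith.mk_one fun x y ↦ ?_
  rw [EuclideanSpace.dist_eq, EuclideanSpace.dist_eq]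
  gcongr with i
  exact lipschitzWith_posPart.dist_le_mul (x i) (y i) |>.trans_eq (one_mul _)

theorem exists_isComplementary_of_strongly_monotone
    {F : EuclideanSpace ℝ ι → EuclideanSpace ℝ ι} {K : ℝ≥0} {μ : ℝ} (hF : LipschitzWith K F)
    (hμ : 0 < μ) (hmono : ∀ x y, μ * ‖x - y‖ ^ 2 ≤ ⟪x - y, F x - F y⟫) :
    ∃ x, IsComplementary x.ofLp (F x).ofLp := by
  obtain ⟨τ, hτ, k, hk, hlip⟩ := exists_contractingWith_sub_smul hF hμ hmono
  have hG : ContractingWith k fun x ↦ WithLp.toLp 2 (x - τ • F x).ofLp⁺ :=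
    ⟨hk, by simpa using! lipschitzWith_toLp_posPart_ofLp.comp hlip⟩
  exact ⟨_, isComplementary_of_posPart_sub_smul_eq hτ
    (congrArg WithLp.ofLp hG.fixedPoint_isFixedPt)⟩

theorem exists_isComplementary_mulVec_add_of_coercive {N : Matrix ι ι ℝ} {μ : ℝ} (hμ : 0 < μ)
    (hN : ∀ y, μ * (y ⬝ᵥ y) ≤ y ⬝ᵥ N *ᵥ y) (b : ι → ℝ) :
    ∃ x, IsComplementary x (N *ᵥ x + b) := by
  classical
  let A := toEuclideanCLM (𝕜 := ℝ) N
  have hF : LipschitzWith ‖A‖₊ fun x ↦ A x + WithLp.toLp 2 b := by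
    simpa using A.lipschitz.add (LipschitzWith.const (WithLp.toLp 2 b))
  obtain ⟨x, hx⟩ := exists_isComplementary_of_strongly_monotone hF hμ fun x y ↦ by
    rw [add_sub_add_right_eq_sub, ← map_sub, inner_toEuclideanCLM, EuclideanSpace.real_norm_sq_eq]
    simpa [dotProduct, sq] using hN (x - y).ofLp
  exact ⟨x.ofLp, hx⟩

end StrongMonotonicity

section Regularization

lemma tendsto_smul_nhdsGT_zero_of_mul_sq_norm_le {E : Type*} [SeminormedAddCommGroup E]
    [NormedSpace ℝ E] {x : ℝ → E} {C : ℝ} (h : ∀ᶠ ε in 𝓝[>] 0, ε * ‖x ε‖ ^ 2 ≤ C) :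
    Tendsto (fun ε ↦ ε • x ε) (𝓝[>] 0) (𝓝 0) := by
  have hsqrt : Tendsto (fun ε : ℝ ↦ √(ε * C)) (𝓝[>] 0) (𝓝 0) := by
    have hcont : Continuous fun ε : ℝ ↦ √(ε * C) := by fun_prop
    simpa using (hcont.tendsto 0).mono_left nhdsWithin_le_nhds
  refine squeeze_zero_norm' ?_ hsqrt
  filter_upwards [h, self_mem_nhdsWithin] with ε hC hε
  apply Real.le_sqrt_of_sq_le
  calc ‖ε • x ε‖ ^ 2 = ε * (ε * ‖x ε‖ ^ 2) := by
        rw [norm_smul, mul_pow, Real.norm_eq_abs, sq_abs]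
        ring
    _ ≤ ε * C := mul_le_mul_of_nonneg_left hC (le_of_lt hε)

variable {ι : Type*} [Fintype ι] {M : Matrix ι ι ℝ}

lemma sq_norm_le_dotProduct_self (x : ι → ℝ) : ‖x‖ ^ 2 ≤ x ⬝ᵥ x := by
  have hx : 0 ≤ x ⬝ᵥ x := Finset.sum_nonneg fun i _ ↦ mul_self_nonneg (x i)
  rw [← Real.le_sqrt (norm_nonneg x) hx, pi_norm_le_iff_of_nonneg (Real.sqrt_nonneg _)]
  refine fun i ↦ Real.abs_le_sqrt ?_
  rw [sq]
  exact Finset.single_le_sum (f := fun j ↦ x j * x j) (fun j _ ↦ mul_self_nonneg (x j))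
    (Finset.mem_univ i)

lemma exists_isComplementary_regularization (hM : ∀ y, 0 ≤ y ⬝ᵥ M *ᵥ y) (b : ι → ℝ) {ε : ℝ}
    (hε : 0 < ε) : ∃ x, IsComplementary x (M *ᵥ x + (b + ε • x)) := by
  classical
  have hadd (y : ι → ℝ) : (M + ε • (1 : Matrix ι ι ℝ)) *ᵥ y = M *ᵥ y + ε • y := by
    rw [add_mulVec, smul_mulVec, one_mulVec]
  obtain ⟨x, hx⟩ := exists_isComplementary_mulVec_add_of_coercive (N := M + ε • 1) hε
    (fun y ↦ by simpa [hadd] using hM y) b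
  exact ⟨x, by rwa [hadd, add_assoc, add_comm (ε • x)] at hx⟩

theorem lcp_exists_of_psd_of_feasible_general (M : Matrix ι ι ℝ) (b : ι → ℝ)
    (hpsd : ∀ x : ι → ℝ, 0 ≤ x ⬝ᵥ M *ᵥ x) (hfeas : ∃ x : ι → ℝ, 0 ≤ x ∧ 0 ≤ M *ᵥ x + b) :
    ∃ x : ι → ℝ, 0 ≤ x ∧ 0 ≤ M *ᵥ x + b ∧ x ⬝ᵥ (M *ᵥ x + b) = 0 := by
  obtain ⟨z, hz, hq⟩ := hfeas
  choose! x hx using fun ε : ℝ ↦ exists_isComplementary_regularization hpsd b (ε := ε)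
  have hbound : ∀ᶠ ε in 𝓝[>] 0, ε * ‖x ε‖ ^ 2 ≤ z ⬝ᵥ z + 2 * (z ⬝ᵥ (M *ᵥ z + b)) := by
    filter_upwards [Ioo_mem_nhdsGT one_pos] with ε ⟨hε, hε_lt⟩
    calc ε * ‖x ε‖ ^ 2 ≤ ε * (x ε ⬝ᵥ x ε) :=
          mul_le_mul_of_nonneg_left (sq_norm_le_dotProduct_self _) hε.le
      _ ≤ ε * (z ⬝ᵥ z) + 2 * (z ⬝ᵥ (M *ᵥ z + b)) :=
          mul_dotProduct_self_le_of_isComplementary hε.le hpsd (hx ε hε) hz hq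
      _ ≤ z ⬝ᵥ z + 2 * (z ⬝ᵥ (M *ᵥ z + b)) := by
          gcongr
          exact mul_le_of_le_one_left (dotProduct_nonneg_of_nonneg hz hz) hε_lt.le
  have hlim : Tendsto (fun ε ↦ b + ε • x ε) (𝓝[>] 0) (𝓝 b) := by
    simpa using (tendsto_smul_nhdsGT_zero_of_mul_sq_norm_le hbound).const_add b
  refine (isClosed_setOf_exists_isComplementary M).mem_of_tendsto hlim ?_
  filter_upwards [self_mem_nhdsWithin] with ε hε using ⟨x ε, hx ε hε⟩

end Regularization

/-- If `M` is positive semi-definite (no symmetry assumed) and a feasible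
point exists (`x ≥ 0`, `Mx + b ≥ 0`), then `LCP(M,b)` has a solution. -/
theorem lcp_exists_of_psd_of_feasible {p : ℕ}
    (M : Matrix (Fin p) (Fin p) ℝ) (b : Fin p → ℝ)
    (hpsd : ∀ x : Fin p → ℝ, 0 ≤ x ⬝ᵥ M.mulVec x)
    (hfeas : ∃ x : Fin p → ℝ, 0 ≤ x ∧ 0 ≤ M.mulVec x + b) :
    ∃ x : Fin p → ℝ, 0 ≤ x ∧ 0 ≤ M.mulVec x + b ∧ x ⬝ᵥ (M.mulVec x + b) = 0 :=
  lcp_exists_of_psd_of_feasible_general M b hpsd hfeas
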